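/- Let H be a complex separable Hilbert space, let B be a densely defined closed linear operator in H and A a bounded operator on H such that A, B and AB are all normal. If A*AB ⊂ BA*A and AB*B ⊂ B*BA, then BA is normal. -/

import Mathlib

noncomputable section

variable {H : Type*} [NormedAddCommGroup H] [InnerProductSpace ℂ H] [CompleteSpace H]

namespace LinearPMap

/-- The composition `S ∘ T` of two partially defined linear operators, with its natural
domain `{x ∈ D(T) : T x ∈ D(S)}`. -/
noncomputable def pcomp (S T : H →ₗ.[ℂ] H) : H →ₗ.[ℂ] H :=
  { domain := (S.domain.comap T.toFun).map T.domain.subtype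
    toFun := (S.toFun.comp ((T.toFun.comp (S.domain.comap T.toFun).subtype).codRestrict
        S.domain fun x => x.2)).comp
      (Submodule.equivMapOfInjective T.domain.subtype Subtype.val_injective
        (S.domain.comap T.toFun)).symm.toLinearMap }

/-- A bounded operator viewed as a partially defined operator with domain the
whole space. -/
noncomputable def ofCLM (A : H →L[ℂ] H) : H →ₗ.[ℂ] H :=
  A.toLinearMap.toPMap ⊤

/-- An unbounded densely defined operator is *normal* if it is closed and
`N N* = N* N` (including equality of the natural domains). -/
def IsNormalPMap (N : H →ₗ.[ℂ] H) : Prop :=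
  Dense (N.domain : Set H) ∧ N.IsClosed ∧ N.pcomp N.adjoint = N.adjoint.pcomp N

end LinearPMap

open LinearPMap ContinuousLinearMap

/-- A bounded operator `T` is *normal* if `T T* = T* T`. -/
def IsNormalOp (T : H →L[ℂ] H) : Prop :=
  T * ContinuousLinearMap.adjoint T = ContinuousLinearMap.adjoint T * T

theorem kap_mem_pcomp (S T : H →ₗ.[ℂ] H) (x z : H) :
    (x, z) ∈ (S.pcomp T).graph ↔ ∃ y, (x, y) ∈ T.graph ∧ (y, z) ∈ S.graph := by
  have key : ∀ (a : T.domain) (ha : T.toFun a ∈ S.domain) (h : (a : H) ∈ (S.pcomp T).domain),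
      (S.pcomp T) ⟨a, h⟩ = S ⟨T.toFun a, ha⟩ := by
    intro a ha h
    have e : (Submodule.equivMapOfInjective T.domain.subtype Subtype.val_injective
        (S.domain.comap T.toFun)).symm ⟨a, h⟩ = ⟨a, ha⟩ := by
      rw [LinearEquiv.symm_apply_eq]
      rfl
    change S.toFun (((T.toFun.comp (S.domain.comap T.toFun).subtype).codRestrict
        S.domain fun x => x.2) ((Submodule.equivMapOfInjective T.domain.subtype
          Subtype.val_injective (S.domain.comap T.toFun)).symm ⟨a, h⟩)) = _
    rw [e]
    rfl
  constructor
  · intro h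
    rw [LinearPMap.mem_graph_iff] at h
    obtain ⟨⟨w, hw⟩, h1, h2⟩ := h
    obtain ⟨a, ha, rfl⟩ := hw
    have ha' : T.toFun a ∈ S.domain := ha
    refine ⟨T a, ?_, ?_⟩
    · rw [LinearPMap.mem_graph_iff]
      exact ⟨a, h1, rfl⟩
    · rw [LinearPMap.mem_graph_iff]
      refine ⟨⟨T.toFun a, ha'⟩, rfl, ?_⟩
      rw [← h2]
      exact (key a ha' _).symm
  · rintro ⟨y, h1, h2⟩
    rw [LinearPMap.mem_graph_iff] at h1 h2 ⊢
    obtain ⟨a, h1, h3⟩ := h1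
    obtain ⟨b, h2, h4⟩ := h2
    simp only at h1 h2 h3 h4
    have hb : T.toFun a ∈ S.domain := by
      change T a ∈ S.domain
      rw [h3, ← h2]; exact b.2
    refine ⟨⟨a, ⟨a, hb, rfl⟩⟩, h1, ?_⟩
    refine (key a hb _).trans ?_
    change _ = z
    rw [← h4]
    congr 1
    apply Subtype.ext
    change T a = b
    rw [h3, h2]

theorem kap_mem_ofCLM (A : H →L[ℂ] H) (x y : H) :
    (x, y) ∈ (ofCLM A).graph ↔ y = A x := by
  rw [LinearPMap.mem_graph_iff]
  constructor
  · rintro ⟨a, h1, h2⟩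
    simp only at h1 h2
    rw [← h1, ← h2]
    rfl
  · rintro rfl
    exact ⟨⟨x, trivial⟩, rfl, rfl⟩

theorem kap_mem_adjoint {T : H →ₗ.[ℂ] H} (hT : Dense (T.domain : Set H)) (y w : H) :
    (y, w) ∈ T.adjoint.graph ↔ ∀ a b, (a, b) ∈ T.graph → inner ℂ b y = inner ℂ a w := by
  rw [LinearPMap.adjoint_graph_eq_graph_adjoint hT, Submodule.mem_adjoint_iff]
  simp only [sub_eq_zero]

theorem kap_decomp {T : H →ₗ.[ℂ] H} (hT : Dense (T.domain : Set H)) (hc : T.IsClosed) (h k : H) :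
    ∃ x b p q, (x, b) ∈ T.graph ∧ (q, -p) ∈ T.adjoint.graph ∧ h = x + p ∧ k = b + q := by
  let e := WithLp.prodContinuousLinearEquiv 2 ℂ H H
  let G : Submodule ℂ (WithLp 2 (H × H)) := T.graph.comap e.toLinearEquiv.toLinearMap
  have hG : _root_.IsClosed (G : Set (WithLp 2 (H × H))) := by
    have : _root_.IsClosed (T.graph : Set (H × H)) := hc
    exact this.preimage e.continuous
  haveI : CompleteSpace G := hG.completeSpace_coe
  let v : WithLp 2 (H × H) := WithLp.toLp 2 (h, k)
  obtain ⟨g, hg, r, hr, hv⟩ := G.exists_add_mem_mem_orthogonal v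
  refine ⟨g.fst, g.snd, r.fst, r.snd, hg, ?_, congrArg WithLp.fst hv, congrArg WithLp.snd hv⟩
  rw [kap_mem_adjoint hT]
  intro a b hab
  have := (Submodule.mem_orthogonal G r).1 hr (WithLp.toLp 2 (a, b)) hab
  rw [WithLp.prod_inner_apply] at this
  rw [inner_neg_right]
  exact eq_neg_of_add_eq_zero_right this

/-- `1 + T*T` is onto. -/
theorem kap_surj1 {T : H →ₗ.[ℂ] H} (hT : Dense (T.domain : Set H)) (hc : T.IsClosed) (h : H) :
    ∃ x z, (x, z) ∈ (T.adjoint.pcomp T).graph ∧ x + z = h := by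
  obtain ⟨x, b, p, q, h1, h2, h3, h4⟩ := kap_decomp hT hc h 0
  refine ⟨x, p, (kap_mem_pcomp _ _ _ _).2 ⟨b, h1, ?_⟩, h3.symm⟩
  have := T.adjoint.graph.neg_mem h2
  have hb : b = -q := eq_neg_of_add_eq_zero_left h4.symm
  simpa [hb] using this

/-- `1 + TT*` is onto. -/
theorem kap_surj2 {T : H →ₗ.[ℂ] H} (hT : Dense (T.domain : Set H)) (hc : T.IsClosed) (h : H) :
    ∃ x z, (x, z) ∈ (T.pcomp T.adjoint).graph ∧ x + z = h := by
  obtain ⟨x, b, p, q, h1, h2, h3, h4⟩ := kap_decomp hT hc 0 h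
  have hx : x = -p := eq_neg_of_add_eq_zero_left h3.symm
  refine ⟨q, b, (kap_mem_pcomp _ _ _ _).2 ⟨-p, h2, hx ▸ h1⟩, ?_⟩
  rw [h4, add_comm]

theorem kap_inner {T : H →ₗ.[ℂ] H} (hT : Dense (T.domain : Set H)) {a b y w : H}
    (h : (y, w) ∈ T.adjoint.graph) (h' : (a, b) ∈ T.graph) :
    inner ℂ b y = inner ℂ a w := (kap_mem_adjoint hT y w).1 h a b h'

theorem kap_inner' {T : H →ₗ.[ℂ] H} (hT : Dense (T.domain : Set H)) {a b y w : H}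
    (h : (y, w) ∈ T.adjoint.graph) (h' : (a, b) ∈ T.graph) :
    inner ℂ y b = inner ℂ w a := by
  rw [← inner_conj_symm, kap_inner hT h h', inner_conj_symm]

theorem kap_symm1 {T : H →ₗ.[ℂ] H} (hT : Dense (T.domain : Set H)) {x z u v : H}
    (h : (x, z) ∈ (T.adjoint.pcomp T).graph) (h' : (u, v) ∈ (T.adjoint.pcomp T).graph) :
    inner ℂ x v = inner ℂ z u := by
  obtain ⟨y, h1, h2⟩ := (kap_mem_pcomp _ _ _ _).1 h
  obtain ⟨w, h3, h4⟩ := (kap_mem_pcomp _ _ _ _).1 h'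
  rw [← kap_inner hT h4 h1, kap_inner' hT h2 h3]

theorem kap_symm2 {T : H →ₗ.[ℂ] H} (hT : Dense (T.domain : Set H)) {x z u v : H}
    (h : (x, z) ∈ (T.pcomp T.adjoint).graph) (h' : (u, v) ∈ (T.pcomp T.adjoint).graph) :
    inner ℂ x v = inner ℂ z u := by
  obtain ⟨y, h1, h2⟩ := (kap_mem_pcomp _ _ _ _).1 h
  obtain ⟨w, h3, h4⟩ := (kap_mem_pcomp _ _ _ _).1 h'
  rw [kap_inner' hT h1 h4, ← kap_inner hT h3 h2]

/-- `T*T` is self-adjoint. -/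
theorem kap_selfadj {T : H →ₗ.[ℂ] H} (hT : Dense (T.domain : Set H)) (hc : T.IsClosed) {w v : H}
    (h : ∀ a b, (a, b) ∈ (T.adjoint.pcomp T).graph → inner ℂ w b = inner ℂ v a) :
    (w, v) ∈ (T.adjoint.pcomp T).graph := by
  obtain ⟨y, z, hyz, hs⟩ := kap_surj1 hT hc (w + v)
  obtain ⟨a, b, hab, hs'⟩ := kap_surj1 hT hc (w - y)
  have h0 : inner ℂ (w - y) (w - y) = 0 := by
    nth_rewrite 2 [← hs']
    rw [inner_sub_left, inner_add_right, inner_add_right, h a b hab, kap_symm1 hT hyz hab,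
      ← inner_add_left, ← inner_add_left, hs, sub_self]
  have h1 : w = y := sub_eq_zero.1 (inner_self_eq_zero.1 h0)
  subst h1
  have h2 : z = v := add_left_cancel hs
  exact h2 ▸ hyz

/-- `D(T*T)` is dense. -/
theorem kap_dense {T : H →ₗ.[ℂ] H} (hT : Dense (T.domain : Set H)) (hc : T.IsClosed) :
    Dense ((T.adjoint.pcomp T).domain : Set H) := by
  rw [Submodule.dense_iff_topologicalClosure_eq_top, Submodule.topologicalClosure_eq_top_iff,
    Submodule.eq_bot_iff]
  intro w hw
  obtain ⟨y, z, hyz, hs⟩ := kap_surj1 hT hc w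
  have hy : y ∈ (T.adjoint.pcomp T).domain := LinearPMap.mem_domain_of_mem_graph hyz
  have h0 := (Submodule.mem_orthogonal _ w).1 hw y hy
  obtain ⟨b, h1, h2⟩ := (kap_mem_pcomp _ _ _ _).1 hyz
  rw [← hs, inner_add_right, ← kap_inner hT h2 h1] at h0
  have h3 := congrArg Complex.re h0
  have h4 : 0 ≤ (inner ℂ b b : ℂ).re := inner_self_nonneg (𝕜 := ℂ)
  have h5 : 0 ≤ (inner ℂ y y : ℂ).re := inner_self_nonneg (𝕜 := ℂ)
  rw [Complex.add_re, Complex.zero_re] at h3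
  have h6 : (inner ℂ y y : ℂ).re = 0 := by linarith
  have hy0 : y = 0 := inner_self_eq_zero.1 (by
    apply Complex.ext
    · simpa using h6
    · exact inner_self_im (𝕜 := ℂ) y)
  subst hy0
  have hz : z = 0 := LinearPMap.graph_fst_eq_zero_snd _ hyz rfl
  rw [← hs, hz, add_zero]

/-- If `B` is densely defined and closed, `A` is bounded, `A`, `B` and `AB` are all
normal, `A* A B ⊂ B A* A` and `A B* B ⊂ B* B A`, then `BA` is normal. -/
theorem kaplansky_unbounded_normal [TopologicalSpace.SeparableSpace H] (B : H →ₗ.[ℂ] H) (A : H →L[ℂ] H)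
    (hBdense : Dense (B.domain : Set H)) (hBclosed : B.IsClosed)
    (hA : IsNormalOp A) (hB : IsNormalPMap B) (hAB : IsNormalPMap ((ofCLM A).pcomp B))
    (h1 : (ofCLM (ContinuousLinearMap.adjoint A * A)).pcomp B ≤
      B.pcomp (ofCLM (ContinuousLinearMap.adjoint A * A)))
    (h2 : (ofCLM A).pcomp (B.adjoint.pcomp B) ≤ (B.adjoint.pcomp B).pcomp (ofCLM A)) :
    IsNormalPMap (B.pcomp (ofCLM A)) := by
  have hd := hBdense
  set T := B.adjoint.pcomp B with hTdef
  set M := B.pcomp (ofCLM A) with hMdef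
  have hcomm : B.pcomp B.adjoint = T := hB.2.2
  have memM : ∀ x z, (x, z) ∈ M.graph ↔ (A x, z) ∈ B.graph := by
    intro x z
    rw [hMdef, kap_mem_pcomp]
    simp only [kap_mem_ofCLM, exists_eq_left]
  have hT2 : ∀ u v, (u, v) ∈ T.graph → (A u, A v) ∈ T.graph := by
    intro u v huv
    have h : (u, A v) ∈ ((ofCLM A).pcomp T).graph :=
      (kap_mem_pcomp _ _ _ _).2 ⟨v, huv, (kap_mem_ofCLM _ _ _).2 rfl⟩
    obtain ⟨y, h3, h4⟩ := (kap_mem_pcomp _ _ _ _).1 (LinearPMap.le_graph_of_le h2 h)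
    rw [kap_mem_ofCLM] at h3
    exact h3 ▸ h4
  have hT1 : ∀ u v, (u, v) ∈ B.graph →
      (ContinuousLinearMap.adjoint A (A u), ContinuousLinearMap.adjoint A (A v)) ∈ B.graph := by
    intro u v huv
    have h : (u, ContinuousLinearMap.adjoint A (A v)) ∈
        ((ofCLM (ContinuousLinearMap.adjoint A * A)).pcomp B).graph :=
      (kap_mem_pcomp _ _ _ _).2 ⟨v, huv, (kap_mem_ofCLM _ _ _).2 rfl⟩
    obtain ⟨y, h3, h4⟩ := (kap_mem_pcomp _ _ _ _).1 (LinearPMap.le_graph_of_le h1 h)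
    rw [kap_mem_ofCLM] at h3
    subst h3
    exact h4
  have hAA : ∀ x, A (ContinuousLinearMap.adjoint A x) = ContinuousLinearMap.adjoint A (A x) :=
    fun x => congrArg (fun f : H →L[ℂ] H => f x) hA
  have hMd : Dense (M.domain : Set H) := by
    refine (kap_dense hd hBclosed).mono ?_
    intro u hu
    have hu' := hT2 u _ (T.mem_graph ⟨u, hu⟩)
    obtain ⟨y, h3, h4⟩ := (kap_mem_pcomp _ _ _ _).1 hu'
    exact LinearPMap.mem_domain_of_mem_graph ((memM u y).2 h3)
  have hMc : M.IsClosed := by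
    have hc : _root_.IsClosed (B.graph : Set (H × H)) := hBclosed
    have hf : Continuous (fun p : H × H => (A p.1, p.2)) := by fun_prop
    have := hc.preimage hf
    have e : (M.graph : Set (H × H)) = (fun p : H × H => (A p.1, p.2)) ⁻¹' (B.graph : Set (H × H)) := by
      ext ⟨x, z⟩
      exact memM x z
    change _root_.IsClosed (M.graph : Set (H × H))
    rw [e]
    exact this
  -- both products extend `A*A T`
  have ext1 : ∀ u v, (u, v) ∈ T.graph →
      (u, ContinuousLinearMap.adjoint A (A v)) ∈ (M.adjoint.pcomp M).graph := by
    intro u v huv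
    obtain ⟨y, h3, h4⟩ := (kap_mem_pcomp _ _ _ _).1 (hT2 u v huv)
    refine (kap_mem_pcomp _ _ _ _).2 ⟨y, (memM u y).2 h3, (kap_mem_adjoint hMd _ _).2 ?_⟩
    intro a b hab
    rw [kap_inner hd h4 ((memM a b).1 hab), ContinuousLinearMap.adjoint_inner_right]
  have ext2 : ∀ u v, (u, v) ∈ T.graph →
      (u, ContinuousLinearMap.adjoint A (A v)) ∈ (M.pcomp M.adjoint).graph := by
    intro u v huv
    rw [← hcomm] at huv
    obtain ⟨y, h3, h4⟩ := (kap_mem_pcomp _ _ _ _).1 huv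
    refine (kap_mem_pcomp _ _ _ _).2 ⟨ContinuousLinearMap.adjoint A y,
      (kap_mem_adjoint hMd _ _).2 ?_, (memM _ _).2 ?_⟩
    · intro a b hab
      rw [kap_inner hd h3 ((memM a b).1 hab), ContinuousLinearMap.adjoint_inner_right]
    · rw [hAA]
      exact hT1 _ _ h4
  have adjP : ∀ x y : H, inner ℂ (ContinuousLinearMap.adjoint A (A x)) y =
      inner ℂ x (ContinuousLinearMap.adjoint A (A y)) := by
    intro x y
    rw [ContinuousLinearMap.adjoint_inner_left, ContinuousLinearMap.adjoint_inner_right]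
  have sub1 : ∀ x z, (x, z) ∈ (M.adjoint.pcomp M).graph →
      (ContinuousLinearMap.adjoint A (A x), z) ∈ T.graph := by
    intro x z hx
    refine kap_selfadj hd hBclosed ?_
    intro a b hab
    rw [adjP, kap_symm1 hMd hx (ext1 a b hab)]
  have sub2 : ∀ x z, (x, z) ∈ (M.pcomp M.adjoint).graph →
      (ContinuousLinearMap.adjoint A (A x), z) ∈ T.graph := by
    intro x z hx
    refine kap_selfadj hd hBclosed ?_
    intro a b hab
    rw [adjP, kap_symm2 hMd hx (ext2 a b hab)]
  -- `1 + T A*A` is injective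
  have inj : ∀ x z y w, (ContinuousLinearMap.adjoint A (A x), z) ∈ T.graph →
      (ContinuousLinearMap.adjoint A (A y), w) ∈ T.graph → x + z = y + w → x = y ∧ z = w := by
    intro x z y w hx hy he
    have hg : (ContinuousLinearMap.adjoint A (A (x - y)), z - w) ∈ T.graph := by
      simpa using T.graph.sub_mem hx hy
    have hzw : z - w = -(x - y) := by
      have : x + z - (y + w) = 0 := sub_eq_zero.2 he
      rw [← sub_eq_zero, ← this]; abel
    obtain ⟨b, h3, h4⟩ := (kap_mem_pcomp _ _ _ _).1 hg
    have h5 := kap_inner hd h4 h3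
    rw [hzw, inner_neg_right, ContinuousLinearMap.adjoint_inner_left] at h5
    have h6 := congrArg Complex.re h5
    rw [Complex.neg_re] at h6
    have h7 : 0 ≤ (inner ℂ b b : ℂ).re := inner_self_nonneg (𝕜 := ℂ)
    have h8 : 0 ≤ (inner ℂ (A (x - y)) (A (x - y)) : ℂ).re := inner_self_nonneg (𝕜 := ℂ)
    have h9 : (inner ℂ (A (x - y)) (A (x - y)) : ℂ).re = 0 := by linarith
    have h10 : A (x - y) = 0 := inner_self_eq_zero.1 (by
      apply Complex.ext
      · simpa using h9
      · exact inner_self_im (𝕜 := ℂ) _)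
    rw [h10, _root_.map_zero] at hg
    have h11 : z - w = 0 := LinearPMap.graph_fst_eq_zero_snd _ hg rfl
    have h12 : z = w := sub_eq_zero.1 h11
    exact ⟨by rw [h12] at he; exact add_right_cancel he, h12⟩
  refine ⟨hMd, hMc, LinearPMap.eq_of_eq_graph ?_⟩
  ext ⟨x, z⟩
  constructor
  · intro h
    obtain ⟨y, w, hyw, hs⟩ := kap_surj1 hMd hMc (x + z)
    obtain ⟨e1, e2⟩ := inj _ _ _ _ (sub2 _ _ h) (sub1 _ _ hyw) hs.symm
    rw [e1, e2]
    exact hyw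
  · intro h
    obtain ⟨y, w, hyw, hs⟩ := kap_surj2 hMd hMc (x + z)
    obtain ⟨e1, e2⟩ := inj _ _ _ _ (sub1 _ _ h) (sub2 _ _ hyw) hs.symm
    rw [e1, e2]
    exact hyw
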